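/- arXiv:2408.04030 — 2 statements merged into one kernel-verified Lean document; each statement's English description precedes it below -/
import Mathlib

section
/- Let z₀, γ₀ ∈ 𝔻 and γ₁ ∈ 𝔻. Let f ∈ ℋ satisfy f(z₀) = γ₀ and H¹f(z₀) = γ₁. Then there exists f* ∈ 𝒮 such that f(z) = T_{γ₀}(T_{−z₀}(z)·T_{γ₁}(T_{−z₀}(z)·f*(z))) for all z ∈ 𝔻. -/
open Complex Metric

/-- `ℋ`: analytic self-maps of the open unit disk. -/
def Hclass (f : ℂ → ℂ) : Prop :=
  DifferentiableOn ℂ f (ball (0 : ℂ) 1) ∧ Set.MapsTo f (ball (0 : ℂ) 1) (ball (0 : ℂ) 1)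

/-- `𝒮`: analytic maps of the open unit disk into the closed unit disk. -/
def Sclass (f : ℂ → ℂ) : Prop :=
  DifferentiableOn ℂ f (ball (0 : ℂ) 1) ∧ Set.MapsTo f (ball (0 : ℂ) 1) (closedBall (0 : ℂ) 1)

/-- The Möbius transformation `T_a(z) = (z + a)/(1 + conj(a) z)`. -/
noncomputable def T (a z : ℂ) : ℂ := (z + a) / (1 + (starRingEnd ℂ) a * z)

/-- The (first-order) hyperbolic derivative `H¹f(z) = (1-|z|²)f'(z)/(1-|f(z)|²)`. -/
noncomputable def H1 (f : ℂ → ℂ) (z : ℂ) : ℂ :=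
  ((1 - ‖z‖ ^ 2 : ℝ) : ℂ) * deriv f z / ((1 - ‖f z‖ ^ 2 : ℝ) : ℂ)


lemma T_den_ne {a z : ℂ} (ha : a ∈ ball (0 : ℂ) 1) (hz : z ∈ ball (0 : ℂ) 1) :
    1 + (starRingEnd ℂ) a * z ≠ 0 := by
  intro h
  rw [mem_ball_zero_iff] at ha hz
  have h1 : (starRingEnd ℂ) a * z = -1 := by linear_combination h
  have h2 : ‖a‖ * ‖z‖ = 1 := by
    have := congrArg norm h1
    simpa using this
  nlinarith [norm_nonneg a, norm_nonneg z]

lemma neg_mem_b {a : ℂ} (ha : a ∈ ball (0 : ℂ) 1) : -a ∈ ball (0 : ℂ) 1 := by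
  simpa using ha

lemma T_mem {a z : ℂ} (ha : a ∈ ball (0 : ℂ) 1) (hz : z ∈ ball (0 : ℂ) 1) :
    T a z ∈ ball (0 : ℂ) 1 := by
  have hd := T_den_ne ha hz
  rw [mem_ball_zero_iff] at ha hz ⊢
  unfold T
  rw [norm_div, div_lt_one (norm_pos_iff.2 hd)]
  apply lt_of_pow_lt_pow_left₀ 2 (norm_nonneg _)
  have ha2 : ‖a‖ ^ 2 < 1 := by nlinarith [norm_nonneg a]
  have hz2 : ‖z‖ ^ 2 < 1 := by nlinarith [norm_nonneg z]
  rw [← Complex.normSq_eq_norm_sq, Complex.normSq_apply] at ha2 hz2 ⊢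
  rw [← Complex.normSq_eq_norm_sq, Complex.normSq_apply]
  simp
  nlinarith [mul_pos (sub_pos.2 ha2) (sub_pos.2 hz2)]

lemma T_inv {a z : ℂ} (ha : a ∈ ball (0 : ℂ) 1) (hz : z ∈ ball (0 : ℂ) 1) :
    T a (T (-a) z) = z := by
  have h1 := T_den_ne ha (T_mem (neg_mem_b ha) hz)
  have h2 := T_den_ne (neg_mem_b ha) hz
  unfold T at *
  rw [div_eq_iff h1]
  simp only [map_neg] at *
  generalize hD : 1 + -(starRingEnd ℂ) a * z = D at *
  field_simp
  rw [← hD]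
  ring

lemma T_diff {a : ℂ} (ha : a ∈ ball (0 : ℂ) 1) :
    DifferentiableOn ℂ (T a) (ball (0 : ℂ) 1) := by
  unfold T
  apply DifferentiableOn.div
  · fun_prop
  · fun_prop
  · intro z hz
    exact T_den_ne ha hz

lemma T_hasDeriv {a z : ℂ} (ha : a ∈ ball (0 : ℂ) 1) (hz : z ∈ ball (0 : ℂ) 1) :
    HasDerivAt (T a) ((1 - (starRingEnd ℂ) a * a) / (1 + (starRingEnd ℂ) a * z) ^ 2) z := by
  unfold T
  have h1 : HasDerivAt (fun z : ℂ => z + a) 1 z := (hasDerivAt_id z).add_const a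
  have h2 : HasDerivAt (fun z : ℂ => 1 + (starRingEnd ℂ) a * z) ((starRingEnd ℂ) a) z := by
    simpa using ((hasDerivAt_id z).const_mul ((starRingEnd ℂ) a)).const_add 1
  refine (h1.div h2 (T_den_ne ha hz)).congr_deriv ?_
  congr 1
  ring

lemma dslope_props {g : ℂ → ℂ} (hd : DifferentiableOn ℂ g (ball (0 : ℂ) 1))
    (hm : Set.MapsTo g (ball (0 : ℂ) 1) (ball (0 : ℂ) 1)) (h0 : g 0 = 0) :
    DifferentiableOn ℂ (dslope g 0) (ball (0 : ℂ) 1) ∧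
    (∀ w ∈ ball (0 : ℂ) 1, ‖dslope g 0 w‖ ≤ 1) ∧ ∀ w, g w = w * dslope g 0 w := by
  refine ⟨(differentiableOn_dslope (ball_mem_nhds 0 one_pos)).2 hd, ?_, ?_⟩
  · intro w hw
    have := norm_dslope_le_div_of_mapsTo_ball (R₂ := 1) hd
      (by rw [h0]; exact hm.mono_right ball_subset_closedBall) hw
    simpa using this
  · intro w
    have := sub_smul_dslope g 0 w
    simp [h0] at this
    exact this.symm

theorem schwarz_pick_second_form (z₀ γ₀ γ₁ : ℂ)
    (hz₀ : z₀ ∈ ball (0 : ℂ) 1) (hγ₀ : γ₀ ∈ ball (0 : ℂ) 1)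
    (hγ₁ : γ₁ ∈ ball (0 : ℂ) 1)
    (f : ℂ → ℂ) (hf : Hclass f) (hfz₀ : f z₀ = γ₀) (hH1 : H1 f z₀ = γ₁) :
    ∃ fstar : ℂ → ℂ, Sclass fstar ∧
      ∀ z ∈ ball (0 : ℂ) 1, f z = T γ₀ (T (-z₀) z * T γ₁ (T (-z₀) z * fstar z)) := by
  obtain ⟨hfd, hfm⟩ := hf
  have h0b : (0 : ℂ) ∈ ball (0 : ℂ) 1 := by simp
  have hTz : Set.MapsTo (T z₀) (ball (0 : ℂ) 1) (ball (0 : ℂ) 1) := fun z hz => T_mem hz₀ hz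
  have hTz' : Set.MapsTo (T (-z₀)) (ball (0 : ℂ) 1) (ball (0 : ℂ) 1) :=
    fun z hz => T_mem (neg_mem_b hz₀) hz
  have hTg : Set.MapsTo (T (-γ₀)) (ball (0 : ℂ) 1) (ball (0 : ℂ) 1) :=
    fun z hz => T_mem (neg_mem_b hγ₀) hz
  have hTz0 : T z₀ 0 = z₀ := by simp [T]
  set F : ℂ → ℂ := fun w => T (-γ₀) (f (T z₀ w)) with hF
  have hFd : DifferentiableOn ℂ F (ball (0 : ℂ) 1) :=
    (T_diff (neg_mem_b hγ₀)).comp (hfd.comp (T_diff hz₀) hTz) (hfm.comp hTz)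
  have hFm : Set.MapsTo F (ball (0 : ℂ) 1) (ball (0 : ℂ) 1) := hTg.comp (hfm.comp hTz)
  have hF0 : F 0 = 0 := by simp [hF, hTz0, hfz₀, T]
  obtain ⟨hhd, hhb, hhe⟩ := dslope_props hFd hFm hF0
  have hh0 : dslope F 0 0 = γ₁ := by
    rw [dslope_same]
    have d1 := T_hasDeriv hz₀ h0b
    have d2 : HasDerivAt f (deriv f z₀) (T z₀ 0) := by
      rw [hTz0]
      exact (hfd.differentiableAt (isOpen_ball.mem_nhds hz₀)).hasDerivAt
    have d3 : HasDerivAt (T (-γ₀))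
        ((1 - (starRingEnd ℂ) (-γ₀) * (-γ₀)) / (1 + (starRingEnd ℂ) (-γ₀) * γ₀) ^ 2) (f (T z₀ 0)) := by
      rw [hTz0, hfz₀]
      exact T_hasDeriv (neg_mem_b hγ₀) hγ₀
    have d4 := (d3.comp (0 : ℂ) (d2.comp (0 : ℂ) d1)).deriv
    change deriv F 0 = _ at d4
    rw [d4, ← hH1, H1, hfz₀]
    have e1 : ∀ a : ℂ, ((1 - ‖a‖ ^ 2 : ℝ) : ℂ) = 1 - (starRingEnd ℂ) a * a := by
      intro a
      rw [← Complex.normSq_eq_norm_sq, ← Complex.normSq_eq_conj_mul_self]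
      push_cast
      rfl
    rw [e1, e1]
    have e2 := T_den_ne (neg_mem_b hγ₀) hγ₀
    have e3 : 1 - (starRingEnd ℂ) γ₀ * γ₀ ≠ 0 := by
      intro h; apply e2; rw [map_neg]; linear_combination h
    have e4 : 1 + (starRingEnd ℂ) (-γ₀) * γ₀ = 1 - (starRingEnd ℂ) γ₀ * γ₀ := by
      rw [map_neg]; ring
    have e5 : 1 - (starRingEnd ℂ) (-γ₀) * (-γ₀) = 1 - (starRingEnd ℂ) γ₀ * γ₀ := by
      rw [map_neg]; ring
    rw [e4, e5]
    generalize 1 - (starRingEnd ℂ) γ₀ * γ₀ = q at *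
    field_simp
    simp
    try ring
  have hhm : Set.MapsTo (dslope F 0) (ball (0 : ℂ) 1) (ball (0 : ℂ) 1) := by
    intro w hw
    rw [mem_ball_zero_iff]
    refine lt_of_le_of_ne (hhb w hw) fun heq => ?_
    have hmax : IsMaxOn (norm ∘ dslope F 0) (ball (0 : ℂ) 1) w := by
      intro v hv
      simp only [Set.mem_ofPred_eq, Function.comp, heq]
      exact hhb v hv
    have := Complex.eqOn_of_isPreconnected_of_isMaxOn_norm
      (convex_ball (0 : ℂ) 1).isPreconnected isOpen_ball hhd hw hmax h0b
    simp only [Function.const_apply] at this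
    rw [← this, hh0] at heq
    rw [mem_ball_zero_iff] at hγ₁
    exact hγ₁.ne heq
  set G : ℂ → ℂ := fun w => T (-γ₁) (dslope F 0 w) with hG
  have hGd : DifferentiableOn ℂ G (ball (0 : ℂ) 1) :=
    (T_diff (neg_mem_b hγ₁)).comp hhd hhm
  have hGm : Set.MapsTo G (ball (0 : ℂ) 1) (ball (0 : ℂ) 1) :=
    fun w hw => T_mem (neg_mem_b hγ₁) (hhm hw)
  have hG0 : G 0 = 0 := by
    simp only [hG, hh0]
    simp [T]
  obtain ⟨hkd, hkb, hke⟩ := dslope_props hGd hGm hG0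
  refine ⟨fun z => dslope G 0 (T (-z₀) z), ⟨hkd.comp (T_diff (neg_mem_b hz₀)) hTz', ?_⟩, ?_⟩
  · intro z hz
    rw [mem_closedBall_zero_iff]
    exact hkb _ (hTz' hz)
  · intro z hz
    have hw := hTz' hz
    simp only
    rw [← hke]
    simp only [hG]
    rw [T_inv hγ₁ (hhm hw), ← hhe]
    simp only [hF]
    rw [T_inv hz₀ hz, T_inv hγ₀ (hfm hz)]
end

section
/- Let z₀, γ₀ ∈ 𝔻 and γ₁ ∈ 𝔻. Let f ∈ ℋ satisfy f(z₀) = γ₀ and H¹f(z₀) = γ₁. Then |f''(z₀) − c₂| = ρ₂ if and only if there exists α ∈ ℂ with |α| = 1 such that f(z) = T_{γ₀}(T_{−z₀}(z)·T_{γ₁}(α·T_{−z₀}(z))) for all z ∈ 𝔻. -/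
open Complex Metric

lemma aux_den_ne {a z : ℂ} (ha : ‖a‖ < 1) (hz : ‖z‖ ≤ 1) : 1 + (starRingEnd ℂ) a * z ≠ 0 := by
  intro h
  have h1 : (starRingEnd ℂ) a * z = -1 := by linear_combination h
  have h2 : ‖a‖ * ‖z‖ = 1 := by
    have := congrArg norm h1
    simpa using this
  nlinarith [norm_nonneg a, norm_nonneg z]

lemma aux_T_norm_lt {a z : ℂ} (ha : ‖a‖ < 1) (hz : ‖z‖ < 1) : ‖T a z‖ < 1 := by
  have hne := aux_den_ne ha hz.le
  unfold T
  rw [norm_div, div_lt_one (norm_pos_iff.mpr hne)]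
  have h1 : ‖z + a‖ ^ 2 < ‖1 + (starRingEnd ℂ) a * z‖ ^ 2 := by
    have e : ‖1 + (starRingEnd ℂ) a * z‖ ^ 2 - ‖z + a‖ ^ 2 = (1 - ‖a‖ ^ 2) * (1 - ‖z‖ ^ 2) := by
      simp only [← Complex.normSq_eq_norm_sq, Complex.normSq_apply]
      simp
      ring
    have : 0 < (1 - ‖a‖ ^ 2) * (1 - ‖z‖ ^ 2) := by
      apply mul_pos <;> nlinarith [norm_nonneg a, norm_nonneg z]
    linarith
  exact lt_of_pow_lt_pow_left₀ 2 (norm_nonneg _) h1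

lemma aux_T_inv {a z : ℂ} (ha : ‖a‖ < 1) (hz : ‖z‖ ≤ 1) : T a (T (-a) z) = z := by
  have h1 : 1 + (starRingEnd ℂ) (-a) * z ≠ 0 := aux_den_ne (by simpa using ha) hz
  have h2 : 1 + (starRingEnd ℂ) a * (-a) ≠ 0 := aux_den_ne ha (by simpa using ha.le)
  have h3 : 1 + (starRingEnd ℂ) a * T (-a) z = (1 + (starRingEnd ℂ) a * (-a)) /
      (1 + (starRingEnd ℂ) (-a) * z) := by
    unfold T
    rw [eq_div_iff h1, add_mul, mul_assoc, div_mul_cancel₀ _ h1]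
    simp only [map_neg]; ring
  have h4 : T (-a) z + a = z * (1 + (starRingEnd ℂ) a * (-a)) /
      (1 + (starRingEnd ℂ) (-a) * z) := by
    unfold T
    rw [eq_div_iff h1, add_mul, div_mul_cancel₀ _ h1]
    simp only [map_neg]; ring
  rw [T, h3, h4, div_div_div_cancel_right₀ h1, mul_div_cancel_right₀ _ h2]

lemma aux_T_diff {a : ℂ} (ha : ‖a‖ < 1) : DifferentiableOn ℂ (T a) (ball (0 : ℂ) 1) := by
  intro z hz
  have hne := aux_den_ne ha (mem_ball_zero_iff.mp hz).le
  unfold T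
  apply DifferentiableAt.differentiableWithinAt
  exact DifferentiableAt.div (by fun_prop) (by fun_prop) hne

lemma aux_factor {z₀ c : ℂ} (hz₀ : ‖z₀‖ < 1) (hc : ‖c‖ < 1) {F : ℂ → ℂ} (hF : Hclass F)
    (h0 : F z₀ = c) : ∃ q : ℂ → ℂ, DifferentiableOn ℂ q (ball (0 : ℂ) 1) ∧
      (∀ z ∈ ball (0 : ℂ) 1, ‖q z‖ ≤ 1) ∧
      (∀ z ∈ ball (0 : ℂ) 1, T (-c) (F z) = T (-z₀) z * q z) := by
  have hc' : ‖-c‖ < 1 := by simpa using hc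
  have hz' : ‖-z₀‖ < 1 := by simpa using hz₀
  set G : ℂ → ℂ := fun z => T (-c) (F z) with hG
  have hGd : DifferentiableOn ℂ G (ball 0 1) := (aux_T_diff hc').comp hF.1 hF.2
  have hz0m : z₀ ∈ ball (0 : ℂ) 1 := by simpa using hz₀
  have hnb : ball (0 : ℂ) 1 ∈ nhds z₀ := isOpen_ball.mem_nhds hz0m
  have hG0 : G z₀ = 0 := by simp [hG, h0, T]
  have hqd : DifferentiableOn ℂ (fun z => dslope G z₀ z * (1 + (starRingEnd ℂ) (-z₀) * z))
      (ball 0 1) := ((Complex.differentiableOn_dslope hnb).mpr hGd).mul (by fun_prop)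
  have hfac : ∀ z ∈ ball (0 : ℂ) 1,
      G z = T (-z₀) z * (dslope G z₀ z * (1 + (starRingEnd ℂ) (-z₀) * z)) := by
    intro z hz
    have hne := aux_den_ne hz' (mem_ball_zero_iff.mp hz).le
    have := sub_smul_dslope G z₀ z
    rw [hG0, sub_zero, smul_eq_mul] at this
    rw [← this]
    unfold T
    rw [mul_comm (dslope G z₀ z), ← mul_assoc, div_mul_cancel₀ _ hne, sub_eq_add_neg]
  have hbd : ∀ z ∈ ball (0 : ℂ) 1, ‖G z‖ ≤ ‖T (-z₀) z‖ := by
    intro z hz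
    have hz1 := mem_ball_zero_iff.mp hz
    have hd : DifferentiableOn ℂ (fun w => G (T z₀ w)) (ball 0 1) :=
      hGd.comp (aux_T_diff hz₀) (fun w hw => by
        simpa using aux_T_norm_lt hz₀ (mem_ball_zero_iff.mp hw))
    have hm : Set.MapsTo (fun w => G (T z₀ w)) (ball 0 1) (ball 0 1) := by
      intro w hw
      have h1 : T z₀ w ∈ ball (0 : ℂ) 1 := by
        simpa using aux_T_norm_lt hz₀ (mem_ball_zero_iff.mp hw)
      have := aux_T_norm_lt hc' (mem_ball_zero_iff.mp (hF.2 h1))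
      simpa [hG] using this
    have h00 : (fun w => G (T z₀ w)) 0 = 0 := by
      simp only []
      rw [show T z₀ 0 = z₀ by simp [T], hG0]
    have := Complex.norm_le_norm_of_mapsTo_ball hd (hm.mono_right ball_subset_closedBall) h00
      (aux_T_norm_lt hz' hz1)
    simpa [aux_T_inv hz₀ hz1.le] using this
  refine ⟨_, hqd, ?_, hfac⟩
  have hne' : ∀ z ∈ ball (0 : ℂ) 1, z ≠ z₀ →
      ‖dslope G z₀ z * (1 + (starRingEnd ℂ) (-z₀) * z)‖ ≤ 1 := by
    intro z hz hzz
    have hne := aux_den_ne hz' (mem_ball_zero_iff.mp hz).le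
    have hT : T (-z₀) z ≠ 0 := by
      unfold T
      refine div_ne_zero ?_ hne
      rw [← sub_eq_add_neg]; exact sub_ne_zero.mpr hzz
    have h1 := hbd z hz
    rw [hfac z hz, norm_mul] at h1
    have := norm_pos_iff.mpr hT
    by_contra hcon
    push Not at hcon
    nlinarith
  intro z hz
  by_cases hzz : z = z₀
  · subst hzz
    have hcont := ((hqd.differentiableAt hnb).continuousAt.norm).tendsto
    refine le_of_tendsto (hcont.mono_left (nhdsWithin_le_nhds (s := {z}ᶜ))) ?_
    filter_upwards [self_mem_nhdsWithin, mem_nhdsWithin_of_mem_nhds hnb] with w hw hw2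
    exact hne' w hw2 hw
  · exact hne' z hz hzz

/-- Polynomial form of the factorisation. -/
lemma aux_poly {z₀ c : ℂ} (hz₀ : ‖z₀‖ < 1) (hc : ‖c‖ < 1) {F q : ℂ → ℂ} (hF : Hclass F)
    (h : ∀ z ∈ ball (0 : ℂ) 1, T (-c) (F z) = T (-z₀) z * q z) :
    ∀ z ∈ ball (0 : ℂ) 1, (F z - c) * (1 - (starRingEnd ℂ) z₀ * z) =
      (1 - (starRingEnd ℂ) c * F z) * ((z - z₀) * q z) := by
  intro z hz
  have h1 := aux_den_ne (a := -c) (by simpa using hc) (mem_ball_zero_iff.mp (hF.2 hz)).le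
  have h2 := aux_den_ne (a := -z₀) (by simpa using hz₀) (mem_ball_zero_iff.mp hz).le
  have := h z hz
  unfold T at this
  rw [div_mul_eq_mul_div, div_eq_div_iff h1 h2] at this
  simp only [map_neg] at this
  linear_combination this

lemma aux_deriv1 {z₀ c : ℂ} {F q : ℂ → ℂ} (hF : DifferentiableOn ℂ F (ball 0 1))
    (hq : DifferentiableOn ℂ q (ball 0 1))
    (h : ∀ z ∈ ball (0 : ℂ) 1, (F z - c) * (1 - (starRingEnd ℂ) z₀ * z) =
      (1 - (starRingEnd ℂ) c * F z) * ((z - z₀) * q z)) :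
    ∀ z ∈ ball (0 : ℂ) 1, deriv F z * (1 - (starRingEnd ℂ) z₀ * z) +
        (F z - c) * (-(starRingEnd ℂ) z₀) =
      (-((starRingEnd ℂ) c * deriv F z)) * ((z - z₀) * q z) +
      (1 - (starRingEnd ℂ) c * F z) * (q z + (z - z₀) * deriv q z) := by
  intro z hz
  have hnb : ball (0 : ℂ) 1 ∈ nhds z := isOpen_ball.mem_nhds hz
  have hF' := (hF.differentiableAt hnb).hasDerivAt
  have hq' := (hq.differentiableAt hnb).hasDerivAt
  have hL := (hF'.sub_const c).mul (((hasDerivAt_id z).const_mul ((starRingEnd ℂ) z₀)).const_sub 1)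
  have hR := ((hF'.const_mul ((starRingEnd ℂ) c)).const_sub 1).mul
    (((hasDerivAt_id z).sub_const z₀).mul hq')
  have := hL.unique (hR.congr_of_eventuallyEq (by
    filter_upwards [hnb] with w hw
    simpa using h w hw))
  simpa using this

lemma aux_deriv2 {z₀ c : ℂ} {F q : ℂ → ℂ} (hz : z₀ ∈ ball (0 : ℂ) 1)
    (hF : DifferentiableOn ℂ F (ball 0 1))
    (hq : DifferentiableOn ℂ q (ball 0 1))
    (h : ∀ z ∈ ball (0 : ℂ) 1, (F z - c) * (1 - (starRingEnd ℂ) z₀ * z) =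
      (1 - (starRingEnd ℂ) c * F z) * ((z - z₀) * q z)) :
    iteratedDeriv 2 F z₀ * (1 - (starRingEnd ℂ) z₀ * z₀) - 2 * (starRingEnd ℂ) z₀ * deriv F z₀ =
      2 * (-((starRingEnd ℂ) c * deriv F z₀) * q z₀ +
        (1 - (starRingEnd ℂ) c * F z₀) * deriv q z₀) := by
  have h1 := aux_deriv1 hF hq h
  have hnb : ball (0 : ℂ) 1 ∈ nhds z₀ := isOpen_ball.mem_nhds hz
  have hF' := (hF.differentiableAt hnb).hasDerivAt
  have hq' := (hq.differentiableAt hnb).hasDerivAt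
  have hF'' := ((hF.deriv isOpen_ball).differentiableAt hnb).hasDerivAt
  have hq'' := ((hq.deriv isOpen_ball).differentiableAt hnb).hasDerivAt
  have hi := (hasDerivAt_id z₀)
  have hL := (hF''.mul ((hi.const_mul ((starRingEnd ℂ) z₀)).const_sub 1)).add
    ((hF'.sub_const c).mul_const (-(starRingEnd ℂ) z₀))
  have hR := ((hF''.const_mul ((starRingEnd ℂ) c)).neg.mul ((hi.sub_const z₀).mul hq')).add
    (((hF'.const_mul ((starRingEnd ℂ) c)).const_sub 1).mul
    (hq'.add ((hi.sub_const z₀).mul hq'')))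
  have := hL.unique (hR.congr_of_eventuallyEq (by
    filter_upwards [hnb] with w hw
    simpa using h1 w hw))
  rw [iteratedDeriv_succ, iteratedDeriv_one]
  simp at this
  linear_combination this

theorem schwarz_pick_second_equality (z₀ γ₀ γ₁ : ℂ)
    (hz₀ : z₀ ∈ ball (0 : ℂ) 1) (hγ₀ : γ₀ ∈ ball (0 : ℂ) 1)
    (hγ₁ : γ₁ ∈ ball (0 : ℂ) 1)
    (f : ℂ → ℂ) (hf : Hclass f) (hfz₀ : f z₀ = γ₀) (hH1 : H1 f z₀ = γ₁) :
    ‖iteratedDeriv 2 f z₀ -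
        2 * ((1 - ‖γ₀‖ ^ 2 : ℝ) : ℂ) / ((1 - ‖z₀‖ ^ 2 : ℝ) : ℂ) ^ 2 *
          ((starRingEnd ℂ) z₀ - (starRingEnd ℂ) γ₀ * γ₁) * γ₁‖ =
      2 * (1 - ‖γ₀‖ ^ 2) * (1 - ‖γ₁‖ ^ 2) / (1 - ‖z₀‖ ^ 2) ^ 2 ↔
      ∃ α : ℂ, ‖α‖ = 1 ∧
        ∀ z ∈ ball (0 : ℂ) 1, f z = T γ₀ (T (-z₀) z * T γ₁ (α * T (-z₀) z)) := by
  have nz := mem_ball_zero_iff.mp hz₀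
  have n0 := mem_ball_zero_iff.mp hγ₀
  have n1 := mem_ball_zero_iff.mp hγ₁
  have nz' : ‖-z₀‖ < 1 := by simpa using nz
  have hnb : ball (0 : ℂ) 1 ∈ nhds z₀ := isOpen_ball.mem_nhds hz₀
  have es : ∀ a : ℂ, 1 - (starRingEnd ℂ) a * a = ((1 - ‖a‖ ^ 2 : ℝ) : ℂ) := by
    intro a
    rw [Complex.conj_mul']; push_cast; rfl
  have pos : ∀ a : ℂ, ‖a‖ < 1 → 0 < 1 - ‖a‖ ^ 2 := by
    intro a ha; nlinarith [norm_nonneg a]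
  have ps := pos z₀ nz
  have pt := pos γ₀ n0
  have pu := pos γ₁ n1
  obtain ⟨q, hqd, hqb, hq⟩ := aux_factor nz n0 hf hfz₀
  have hqp := aux_poly nz n0 hf hq
  have d1 := aux_deriv1 hf.1 hqd hqp z₀ hz₀
  have d2 := aux_deriv2 hz₀ hf.1 hqd hqp
  rw [hfz₀] at d1 d2
  rw [H1, hfz₀] at hH1
  simp only [sub_self, zero_mul, mul_zero, add_zero, zero_add] at d1
  rw [es, es] at d1 d2
  set s := 1 - ‖z₀‖ ^ 2 with hs
  set t := 1 - ‖γ₀‖ ^ 2 with ht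
  set u := 1 - ‖γ₁‖ ^ 2 with hu
  have cs : (s : ℂ) ≠ 0 := by exact_mod_cast ps.ne'
  have ct : (t : ℂ) ≠ 0 := by exact_mod_cast pt.ne'
  have cu : (u : ℂ) ≠ 0 := by exact_mod_cast pu.ne'
  have hq0 : q z₀ = γ₁ := by
    rw [← hH1, eq_div_iff ct]; linear_combination -d1
  rw [hq0] at d1 d2
  have hqH : Hclass q := by
    refine ⟨hqd, fun z hz => ?_⟩
    rw [mem_ball_zero_iff]
    refine lt_of_le_of_ne (hqb z hz) fun hcon => ?_
    have hmax : IsMaxOn (norm ∘ q) (ball 0 1) z := by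
      intro w hw
      simpa [hcon] using hqb w hw
    have := Complex.norm_eqOn_of_isPreconnected_of_isMaxOn
      (convex_ball (0 : ℂ) 1).isPreconnected isOpen_ball hqd hz hmax hz₀
    simp [hq0, hcon] at this
    linarith
  obtain ⟨k, hkd, hkb, hk⟩ := aux_factor nz n1 hqH hq0
  have e1 := aux_deriv1 hqd hkd (aux_poly nz n1 hqH hk) z₀ hz₀
  rw [hq0] at e1
  simp only [sub_self, zero_mul, mul_zero, add_zero, zero_add] at e1
  rw [es, es] at e1
  have key : iteratedDeriv 2 f z₀ - 2 * (t : ℂ) / (s : ℂ) ^ 2 *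
          ((starRingEnd ℂ) z₀ - (starRingEnd ℂ) γ₀ * γ₁) * γ₁ =
        ((2 * t * u / s ^ 2 : ℝ) : ℂ) * k z₀ := by
    have a1 : deriv f z₀ = t * γ₁ / s := by rw [eq_div_iff cs]; exact d1
    have a2 : deriv q z₀ = u * k z₀ / s := by rw [eq_div_iff cs]; exact e1
    rw [a1, a2] at d2
    push_cast
    have a3 : iteratedDeriv 2 f z₀ = (2 * (starRingEnd ℂ) z₀ * (t * γ₁ / s) +
      2 * (-((starRingEnd ℂ) γ₀ * (t * γ₁ / s)) * γ₁ + t * (u * k z₀ / s))) / s := by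
      rw [eq_div_iff cs]; linear_combination d2
    rw [a3]
    field_simp
    ring
  have hr : 0 < 2 * t * u / s ^ 2 := by positivity
  rw [key, norm_mul, Complex.norm_real, Real.norm_of_nonneg hr.le]
  have : 2 * t * u / s ^ 2 * ‖k z₀‖ = 2 * t * u / s ^ 2 ↔ ‖k z₀‖ = 1 :=
    mul_eq_left₀ hr.ne'
  rw [this]
  have inv' : ∀ a z : ℂ, ‖a‖ < 1 → ‖z‖ ≤ 1 → T (-a) (T a z) = z := by
    intro a z ha hz
    have := aux_T_inv (a := -a) (by simpa using ha) hz
    simpa using this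
  constructor
  · intro hk1
    refine ⟨k z₀, hk1, fun z hz => ?_⟩
    have hmax : IsMaxOn (norm ∘ k) (ball 0 1) z₀ := by
      intro w hw
      simpa [hk1] using hkb w hw
    have hkc := Complex.eqOn_of_isPreconnected_of_isMaxOn_norm
      (convex_ball (0 : ℂ) 1).isPreconnected isOpen_ball hkd hz₀ hmax hz
    simp only [Function.const_apply] at hkc
    rw [← hkc, mul_comm (k z), ← hk z hz, aux_T_inv n1 (hqb z hz), ← hq z hz,
      aux_T_inv n0 (mem_ball_zero_iff.mp (hf.2 hz)).le]
  · rintro ⟨α, hα, hfα⟩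
    have hkα : ∀ z ∈ ball (0 : ℂ) 1, z ≠ z₀ → k z = α := by
      intro z hz hzz
      have hz1 := mem_ball_zero_iff.mp hz
      have hp := aux_T_norm_lt nz' hz1
      have hT : T (-z₀) z ≠ 0 := by
        unfold T
        refine div_ne_zero ?_ (aux_den_ne nz' hz1.le)
        rw [← sub_eq_add_neg]; exact sub_ne_zero.mpr hzz
      have hαp : ‖α * T (-z₀) z‖ < 1 := by rw [norm_mul, hα, one_mul]; exact hp
      have hT1 := aux_T_norm_lt n1 hαp
      have b1 := hq z hz
      rw [hfα z hz, inv' _ _ n0 (by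
        rw [norm_mul]; exact mul_le_one₀ hp.le (norm_nonneg _) hT1.le)] at b1
      have b2 := mul_left_cancel₀ hT b1
      have b3 := hk z hz
      rw [← b2, inv' _ _ n1 hαp.le, mul_comm α] at b3
      exact (mul_left_cancel₀ hT b3).symm
    have hcont := ((hkd.differentiableAt hnb).continuousAt).tendsto.mono_left
      (nhdsWithin_le_nhds (s := {z₀}ᶜ))
    have : k z₀ = α := by
      refine tendsto_nhds_unique hcont (tendsto_const_nhds.congr' ?_)
      filter_upwards [self_mem_nhdsWithin, mem_nhdsWithin_of_mem_nhds hnb] with w hw hw2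
      exact (hkα w hw2 hw).symm
    rw [this, hα]
end
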